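/- arXiv:2509.09900 — 2 statements merged into one kernel-verified Lean document; each statement's English description precedes it below -/
import Mathlib

section
/- Let $a, b$ be positive real numbers and let $t, k$ be integers with $1 \le t \le k-1$. Then $\left(\frac{a}{t}\right)^{2t} \left(\frac{b}{k-t}\right)^{k-t} \le \left(\frac{a}{k} + \sqrt{\frac{b}{k}}\right)^{2k}$. -/
theorem stmt_3 (a b : ℝ) (ha : 0 < a) (hb : 0 < b) (t k : ℕ)
    (ht : 1 ≤ t) (htk : t ≤ k - 1) :
    (a / (t : ℝ)) ^ (2 * t) * (b / ((k - t : ℕ) : ℝ)) ^ (k - t) ≤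
      (a / (k : ℝ) + Real.sqrt (b / (k : ℝ))) ^ (2 * k) := by
  obtain ⟨m, hm, rfl⟩ : ∃ m : ℕ, 1 ≤ m ∧ k = t + m := ⟨k - t, by omega, by omega⟩
  rw [Nat.add_sub_cancel_left]
  have ht0 : (0 : ℝ) < t := by exact_mod_cast ht
  have hm0 : (0 : ℝ) < m := by exact_mod_cast hm
  push_cast
  have hk0 : (0 : ℝ) < t + m := by positivity
  have hx : 0 ≤ a / (t : ℝ) := by positivity
  have hy : 0 ≤ Real.sqrt (b / m) := Real.sqrt_nonneg _
  have hsq : Real.sqrt (b / m) ^ 2 = b / m := Real.sq_sqrt (by positivity)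
  have key := Real.geom_mean_le_arith_mean2_weighted (w₁ := t / (t + m : ℝ))
    (w₂ := m / (t + m : ℝ)) (by positivity) (by positivity) hx hy (by field_simp)
  have h2 : (m / (t + m : ℝ)) * Real.sqrt (b / m) ≤ Real.sqrt (b / (t + m)) := by
    apply Real.le_sqrt_of_sq_le
    rw [mul_pow, hsq]
    have : (m / (t + m : ℝ)) ^ 2 * (b / m) = (m / (t + m)) * (b / (t + m)) := by
      field_simp
    rw [this]
    apply mul_le_of_le_one_left (by positivity)
    rw [div_le_one hk0]
    linarith
  have h1 : (t / (t + m : ℝ)) * (a / t) = a / (t + m) := by field_simp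
  have h3 : (a / t) ^ (t / (t + m : ℝ)) * Real.sqrt (b / m) ^ (m / (t + m : ℝ)) ≤
      a / (t + m) + Real.sqrt (b / (t + m)) := by linarith
  have h4 := pow_le_pow_left₀ (by positivity) h3 (2 * (t + m))
  refine le_trans (le_of_eq ?_) h4
  rw [mul_pow, ← Real.rpow_mul_natCast hx, ← Real.rpow_mul_natCast hy]
  have e1 : t / (t + m : ℝ) * ((2 * (t + m) : ℕ) : ℝ) = ((2 * t : ℕ) : ℝ) := by
    push_cast; field_simp
  have e2 : m / (t + m : ℝ) * ((2 * (t + m) : ℕ) : ℝ) = ((2 * m : ℕ) : ℝ) := by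
    push_cast; field_simp
  rw [e1, e2, Real.rpow_natCast, Real.rpow_natCast, pow_mul (Real.sqrt _), hsq]
end

section
/- Let $q$, $c$, $k$ be positive integers with $k \le q$ and $k \le c$, and let $t$ be an integer with $0 \le t \le k$. Then $\binom{q}{t}^2 \binom{c}{k-t} \le e^{2k} \left(\frac{q}{k} + \sqrt{\frac{c}{k}}\right)^{2k}$, where $e$ is Euler's number. -/
theorem stmt_4 (q c k t : ℕ) (hq : 0 < q) (hc : 0 < c) (hk : 0 < k)
    (hkq : k ≤ q) (hkc : k ≤ c) (htk : t ≤ k) :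
    (((q.choose t) ^ 2 * c.choose (k - t) : ℕ) : ℝ) ≤
      Real.exp 1 ^ (2 * k) * ((q : ℝ) / (k : ℝ) + Real.sqrt ((c : ℝ) / (k : ℝ))) ^ (2 * k) := by
  obtain ⟨s, rfl⟩ := Nat.exists_eq_add_of_le htk
  have hs : t + s - t = s := by omega
  rw [hs]
  have hC : ((t + s).choose t : ℝ) * (t.factorial : ℝ) * (s.factorial : ℝ)
      = ((t + s).factorial : ℝ) := by
    have := Nat.choose_mul_factorial_mul_factorial htk
    rw [hs] at this
    exact_mod_cast this
  have hsk : (s.factorial : ℝ) ≤ ((t + s : ℕ) : ℝ) ^ s := by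
    have h1 := Nat.factorial_le_pow s
    have h2 : s ^ s ≤ (t + s) ^ s := Nat.pow_le_pow_left (by omega) s
    exact_mod_cast h1.trans h2
  have hbin : ∀ a b : ℝ, 0 ≤ a → 0 ≤ b →
      a ^ t * b ^ s * ((t + s).choose t : ℝ) ≤ (a + b) ^ (t + s) := by
    intro a b ha hb
    rw [add_pow]
    have := Finset.single_le_sum (s := Finset.range (t + s + 1))
      (f := fun m => a ^ m * b ^ (t + s - m) * ((t + s).choose m : ℝ))
      (fun i _ => by positivity) (Finset.mem_range.2 (by omega : t < t + s + 1))
    simpa [hs] using this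
  have hE : ((t + s : ℕ) : ℝ) ^ (t + s) ≤ Real.exp 1 ^ (t + s) * ((t + s).factorial : ℝ) := by
    have := Real.pow_div_factorial_le_exp ((t + s : ℕ) : ℝ) (by positivity) (t + s)
    rw [div_le_iff₀ (by positivity)] at this
    rwa [← Real.exp_one_pow] at this
  have hA : (q.choose t : ℝ) * (t.factorial : ℝ) ≤ (q : ℝ) ^ t := by
    have := Nat.choose_le_pow_div (α := ℝ) t q
    rwa [le_div_iff₀ (by positivity)] at this
  have hB : (c.choose s : ℝ) * (s.factorial : ℝ) ≤ (c : ℝ) ^ s := by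
    have := Nat.choose_le_pow_div (α := ℝ) s c
    rwa [le_div_iff₀ (by positivity)] at this
  have hK : (0 : ℝ) < ((t + s : ℕ) : ℝ) := by exact_mod_cast hk
  generalize ((t + s : ℕ) : ℝ) = K at *
  have ha : (0 : ℝ) ≤ (q : ℝ) / K := by positivity
  have hb := Real.sqrt_nonneg ((c : ℝ) / K)
  have hqa : (q : ℝ) = K * ((q : ℝ) / K) := by field_simp
  have hcb : (c : ℝ) = K * Real.sqrt ((c : ℝ) / K) ^ 2 := by
    rw [Real.sq_sqrt (by positivity)]; field_simp
  have hX := hbin _ _ ha hb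
  generalize (q : ℝ) / K = a at *
  generalize Real.sqrt ((c : ℝ) / K) = b at *
  rw [hqa] at hA
  rw [hcb] at hB
  have htf : (0 : ℝ) < t.factorial := by positivity
  have hsf : (0 : ℝ) < s.factorial := by positivity
  push_cast
  have key : (q.choose t : ℝ) ^ 2 * (c.choose s : ℝ) ≤
      (Real.exp 1 ^ (t + s) * (a ^ t * b ^ s * ((t + s).choose t : ℝ))) ^ 2 := by
    have hp : (0 : ℝ) < (t.factorial : ℝ) ^ 2 * (s.factorial : ℝ) ^ 2 := by positivity
    refine le_of_mul_le_mul_right ?_ hp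
    calc _ = ((q.choose t : ℝ) * t.factorial) ^ 2 * ((c.choose s : ℝ) * s.factorial)
          * s.factorial := by ring
      _ ≤ ((K * a) ^ t) ^ 2 * ((K * b ^ 2) ^ s) * K ^ s := by gcongr
      _ = (K ^ (t + s) * (a ^ t * b ^ s)) ^ 2 := by
          simp only [mul_pow, pow_add, ← pow_mul]; ring
      _ ≤ (Real.exp 1 ^ (t + s) * ((t + s).factorial : ℝ) * (a ^ t * b ^ s)) ^ 2 := by gcongr
      _ = _ := by rw [← hC]; ring
  refine key.trans ?_
  calc _ ≤ (Real.exp 1 ^ (t + s) * (a + b) ^ (t + s)) ^ 2 := by gcongr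
    _ = _ := by rw [mul_pow, ← pow_mul, ← pow_mul, mul_comm (t + s) 2]
end
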